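/- arXiv:2401.02623 — 3 statements merged into one kernel-verified Lean document; each statement's English description precedes it below -/
import Mathlib

section
/- Let V, Φ : ℝ → ℝ be smooth with V, V′ bounded and Φ, Φ′ bounded. Let f : ℝ × ℝ → ℝ be smooth and such that, locally uniformly in t, the functions x ↦ f(t,x) and all partial derivatives of f up to order two decay rapidly in x. Then the function t ↦ P(t) := ∫_ℝ Φ(x) ∂ₓf(t,x) ∂ₜf(t,x) dx is differentiable and for every t one has P′(t) = − (1/2) ∫_ℝ (∂ₜf)² Φ′ dx − (1/2) ∫_ℝ (∂ₓf)² Φ′ dx + (1/2) ∫_ℝ f² Φ′ dx + (1/2) ∫_ℝ f² (VΦ)′ dx + ∫_ℝ Φ ∂ₓf ( ∂ₜ²f − ∂ₓ²f + f + V f ) dx. -/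
/-!
Differentiation under the integral sign and `∂ₜ∂ₓf = ∂ₓ∂ₜf` give
`P' = ∫ Φ (∂ₜf ∂ₓ∂ₜf + ∂ₓf ∂ₜ²f)`. An integration by parts turns each of the integrals `∫ p² w'` on
the right-hand side, where `w` is `Φ` or `VΦ` and `p` is `∂ₜf`, `∂ₓf` or `f`, into `-2 ∫ w p p'`.
The one with `p = ∂ₜf` is the first half of `P'`; the other three cancel the terms `-∂ₓ²f`, `f` and
`V f` of the last integral, which leaves the second half of `P'`.
-/

open MeasureTheory Real Filter

open Function (uncurry)
open scoped Topology ENNReal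

/-- The partial derivative `∂ₜ f` of a function `f t x` in its first variable. -/
noncomputable def timeDeriv {𝕜 E : Type*} [NontriviallyNormedField 𝕜] [NormedAddCommGroup E]
    [NormedSpace 𝕜 E] (f : 𝕜 → 𝕜 → E) (t x : 𝕜) : E :=
  deriv (fun s => f s x) t

/-- The partial derivative `∂ₓ f` of a function `f t x` in its second variable. -/
noncomputable def spaceDeriv {𝕜 E : Type*} [NontriviallyNormedField 𝕜] [NormedAddCommGroup E]
    [NormedSpace 𝕜 E] (f : 𝕜 → 𝕜 → E) (t x : 𝕜) : E :=
  deriv (fun y => f t y) x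

local notation "∂ₜ" => timeDeriv
local notation "∂ₓ" => spaceDeriv

section PartialDeriv

variable {𝕜 E : Type*} [NontriviallyNormedField 𝕜] [NormedAddCommGroup E] [NormedSpace 𝕜 E]
  {f : 𝕜 → 𝕜 → E} {m n : WithTop ℕ∞}

lemma hasDerivAt_fderiv_uncurry_fst {t x : 𝕜} (hf : DifferentiableAt 𝕜 (uncurry f) (t, x)) :
    HasDerivAt (fun s => f s x) (fderiv 𝕜 (uncurry f) (t, x) (1, 0)) t :=
  hf.hasFDerivAt.comp_hasDerivAt (f := fun s => (s, x)) t
    ((hasDerivAt_id t).prodMk (hasDerivAt_const t x))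

lemma hasDerivAt_fderiv_uncurry_snd {t x : 𝕜} (hf : DifferentiableAt 𝕜 (uncurry f) (t, x)) :
    HasDerivAt (f t) (fderiv 𝕜 (uncurry f) (t, x) (0, 1)) x :=
  hf.hasFDerivAt.comp_hasDerivAt (f := fun y => (t, y)) x
    ((hasDerivAt_const x t).prodMk (hasDerivAt_id x))

lemma hasDerivAt_timeDeriv (hf : Differentiable 𝕜 (uncurry f)) (t x : 𝕜) :
    HasDerivAt (fun s => f s x) (∂ₜ f t x) t :=
  (hasDerivAt_fderiv_uncurry_fst (hf (t, x))).differentiableAt.hasDerivAt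

lemma differentiable_right_of_uncurry (hf : Differentiable 𝕜 (uncurry f)) (t : 𝕜) :
    Differentiable 𝕜 (f t) :=
  fun x => (hasDerivAt_fderiv_uncurry_snd (hf (t, x))).differentiableAt

lemma uncurry_timeDeriv (hf : Differentiable 𝕜 (uncurry f)) :
    uncurry (∂ₜ f) = fun p => fderiv 𝕜 (uncurry f) p (1, 0) :=
  funext fun p => (hasDerivAt_fderiv_uncurry_fst (hf p)).deriv

lemma uncurry_spaceDeriv (hf : Differentiable 𝕜 (uncurry f)) :
    uncurry (∂ₓ f) = fun p => fderiv 𝕜 (uncurry f) p (0, 1) :=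
  funext fun p => (hasDerivAt_fderiv_uncurry_snd (hf p)).deriv

lemma contDiff_uncurry_timeDeriv (hf : ContDiff 𝕜 n (uncurry f)) (hmn : m + 1 ≤ n) :
    ContDiff 𝕜 m (uncurry (∂ₜ f)) := by
  rw [uncurry_timeDeriv ((hf.of_le (le_add_self.trans hmn)).differentiable one_ne_zero)]
  exact (hf.fderiv_right hmn).clm_apply contDiff_const

lemma contDiff_uncurry_spaceDeriv (hf : ContDiff 𝕜 n (uncurry f)) (hmn : m + 1 ≤ n) :
    ContDiff 𝕜 m (uncurry (∂ₓ f)) := by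
  rw [uncurry_spaceDeriv ((hf.of_le (le_add_self.trans hmn)).differentiable one_ne_zero)]
  exact (hf.fderiv_right hmn).clm_apply contDiff_const

lemma timeDeriv_spaceDeriv_comm (hf : ContDiff 𝕜 n (uncurry f)) (hn : minSmoothness 𝕜 2 ≤ n) :
    ∂ₜ (∂ₓ f) = ∂ₓ (∂ₜ f) := by
  have h2 : ContDiff 𝕜 2 (uncurry f) := hf.of_le (le_minSmoothness.trans hn)
  have hfd : Differentiable 𝕜 (uncurry f) := h2.differentiable two_ne_zero
  have hf' : Differentiable 𝕜 (fderiv 𝕜 (uncurry f)) :=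
    (h2.fderiv_right (m := 1) one_add_one_eq_two.le).differentiable one_ne_zero
  have hx : Differentiable 𝕜 (uncurry (∂ₓ f)) :=
    (contDiff_uncurry_spaceDeriv h2 (m := 1) one_add_one_eq_two.le).differentiable one_ne_zero
  have ht : Differentiable 𝕜 (uncurry (∂ₜ f)) :=
    (contDiff_uncurry_timeDeriv h2 (m := 1) one_add_one_eq_two.le).differentiable one_ne_zero
  have hswap (p v w : 𝕜 × 𝕜) : fderiv 𝕜 (fun q => fderiv 𝕜 (uncurry f) q v) p w
      = fderiv 𝕜 (fderiv 𝕜 (uncurry f)) p w v := by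
    simp [fderiv_clm_apply (hf' p) (differentiableAt_const v)]
  apply Function.uncurry_injective
  funext p
  rw [uncurry_timeDeriv hx, uncurry_spaceDeriv hfd, uncurry_spaceDeriv ht, uncurry_timeDeriv hfd]
  beta_reduce
  rw [hswap, hswap]
  exact hf.contDiffAt.isSymmSndFDerivAt hn _ _

end PartialDeriv

section LocallyL2Dominated

variable {α A : Type*} [MeasurableSpace α] {μ : Measure α} {t : ℝ}

/-- The functions `g s` are dominated by one square-integrable function for all parameters `s` near
`t`. -/
def LocallyL2Dominated [Norm A] (g : ℝ → α → A) (μ : Measure α) (t : ℝ) : Prop :=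
  ∃ b : α → ℝ, MemLp b 2 μ ∧ ∀ᶠ s in 𝓝 t, ∀ x, ‖g s x‖ ≤ b x

lemma LocallyL2Dominated.memLp [NormedAddCommGroup A] {g : ℝ → α → A}
    (hg : LocallyL2Dominated g μ t) (hgm : AEStronglyMeasurable (g t) μ) : MemLp (g t) 2 μ :=
  let ⟨_, hb, hgb⟩ := hg
  hb.mono' hgm (.of_forall hgb.self_of_nhds)

variable [NormedRing A]

lemma LocallyL2Dominated.bdd_mul {g : ℝ → α → A} (hg : LocallyL2Dominated g μ t) {w : α → A}
    {M : ℝ} (hw : ∀ x, ‖w x‖ ≤ M) : LocallyL2Dominated (fun s x => w x * g s x) μ t := by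
  obtain ⟨b, hb, hgb⟩ := hg
  refine ⟨fun x => M * b x, hb.const_mul M, hgb.mono fun s hs x => ?_⟩
  exact norm_mul_le_of_le (hw x) (hs x)

lemma hasDerivAt_integral_mul_of_locallyL2Dominated [NormedAlgebra ℝ A] {p q p' q' : ℝ → α → A}
    (hp : LocallyL2Dominated p μ t) (hq : LocallyL2Dominated q μ t)
    (hp' : LocallyL2Dominated p' μ t) (hq' : LocallyL2Dominated q' μ t)
    (hpm : ∀ s, AEStronglyMeasurable (p s) μ) (hqm : ∀ s, AEStronglyMeasurable (q s) μ)
    (hpm' : AEStronglyMeasurable (p' t) μ) (hqm' : AEStronglyMeasurable (q' t) μ)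
    (hpd : ∀ s x, HasDerivAt (fun r => p r x) (p' s x) s)
    (hqd : ∀ s x, HasDerivAt (fun r => q r x) (q' s x) s) :
    HasDerivAt (fun s => ∫ x, p s x * q s x ∂μ) (∫ x, (p' t x * q t x + p t x * q' t x) ∂μ) t := by
  have hint : Integrable (fun x => p t x * q t x) μ :=
    (hp.memLp (hpm t)).integrable_mul (hq.memLp (hqm t))
  obtain ⟨a, ha, hpa⟩ := hp
  obtain ⟨b, hb, hqb⟩ := hq
  obtain ⟨a', ha', hpa'⟩ := hp'
  obtain ⟨b', hb', hqb'⟩ := hq'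
  refine (hasDerivAt_integral_of_dominated_loc_of_deriv_le
    (bound := fun x => a' x * b x + a x * b' x)
    (((hpa.and hqb).and hpa').and hqb')
    (.of_forall fun s => (hpm s).mul (hqm s)) hint
    ((hpm'.mul (hqm t)).add ((hpm t).mul hqm')) (.of_forall fun x s hs => ?_)
    ((ha'.integrable_mul hb).add (ha.integrable_mul hb'))
    (.of_forall fun x s _ => (hpd s x).fun_mul (hqd s x))).2
  obtain ⟨⟨⟨hsp, hsq⟩, hsp'⟩, hsq'⟩ := hs
  exact norm_add_le_of_le (norm_mul_le_of_le (hsp' x) (hsq x)) (norm_mul_le_of_le (hsp x) (hsq' x))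

end LocallyL2Dominated

section PolynomialDecay

variable {E A : Type*} [NormedAddCommGroup E] [NormedSpace ℝ E] [FiniteDimensional ℝ E]
  [MeasurableSpace E] [BorelSpace E] {μ : Measure E} [μ.IsAddHaarMeasure] {n : ℕ}

lemma memLp_two_inv_one_add_norm_pow (hn : Module.finrank ℝ E < 2 * n) :
    MemLp (fun x : E => ((1 + ‖x‖) ^ n)⁻¹) 2 μ := by
  rw [memLp_two_iff_integrable_sq (Measurable.aestronglyMeasurable (by fun_prop))]
  have hr : (Module.finrank ℝ E : ℝ) < (2 * n : ℕ) := mod_cast hn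
  refine (integrable_one_add_norm (μ := μ) hr).congr (.of_forall fun x => ?_)
  simp only [rpow_neg (show 0 ≤ 1 + ‖x‖ by positivity), rpow_natCast]
  rw [inv_pow, ← pow_mul, mul_comm]

lemma locallyL2Dominated_of_one_add_norm_pow_mul_le [Norm A] (hn : Module.finrank ℝ E < 2 * n)
    {g : ℝ → E → A} {t C : ℝ} (hg : ∀ᶠ s in 𝓝 t, ∀ x, (1 + ‖x‖) ^ n * ‖g s x‖ ≤ C) :
    LocallyL2Dominated g μ t := by
  refine ⟨_, (memLp_two_inv_one_add_norm_pow hn).const_mul C, hg.mono fun s hs x => ?_⟩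
  rw [← div_eq_mul_inv, le_div_iff₀' (by positivity)]
  exact hs x

end PolynomialDecay

lemma integrable_mul_mul_of_memLp_top_two {α A : Type*} [MeasurableSpace α] {μ : Measure α}
    [NormedRing A] {w p q : α → A} (hw : MemLp w ∞ μ) (hp : MemLp p 2 μ) (hq : MemLp q 2 μ) :
    Integrable (fun x => w x * (p x * q x)) μ :=
  (hp.integrable_mul hq).mul_of_top_right hw

lemma integral_sq_mul_deriv_eq {w p : ℝ → ℝ} (hw : Differentiable ℝ w) (hp : Differentiable ℝ p)
    (hwL : MemLp w ∞) (hwL' : MemLp (deriv w) ∞) (hpL : MemLp p 2) (hpL' : MemLp (deriv p) 2) :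
    ∫ x, p x ^ 2 * deriv w x = -2 * ∫ x, w x * (p x * deriv p x) := by
  have hp2 (x : ℝ) : HasDerivAt (fun y => p y * p y) (2 * (p x * deriv p x)) x :=
    ((hp x).hasDerivAt.fun_mul (hp x).hasDerivAt).congr_deriv (by ring)
  have hww' : Integrable (fun x => w x * (2 * (p x * deriv p x))) :=
    ((integrable_mul_mul_of_memLp_top_two hwL hpL hpL').const_mul 2).congr
      (.of_forall fun x => by ring)
  have hparts := integral_mul_deriv_eq_deriv_mul_of_integrable
    (fun x _ => (hw x).hasDerivAt) (fun x _ => hp2 x) hww'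
    (integrable_mul_mul_of_memLp_top_two hwL' hpL hpL)
    (integrable_mul_mul_of_memLp_top_two hwL hpL hpL)
  calc ∫ x, p x ^ 2 * deriv w x = ∫ x, deriv w x * (p x * p x) := by congr with x; ring
    _ = -∫ x, w x * (2 * (p x * deriv p x)) := by rw [hparts, neg_neg]
    _ = -2 * ∫ x, w x * (p x * deriv p x) := by
      rw [← integral_neg, ← integral_const_mul]; congr with x; ring

/-- A bounded differentiable function on the line with bounded derivative: the class of the
potential `V` and of the weight `Φ`. -/
structure IsBoundedWeight (w : ℝ → ℝ) : Prop where
  differentiable : Differentiable ℝ w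
  bounded : ∃ M : ℝ, ∀ x, ‖w x‖ ≤ M ∧ ‖deriv w x‖ ≤ M

namespace IsBoundedWeight

variable {v w : ℝ → ℝ}

lemma memLp_top (hw : IsBoundedWeight w) : MemLp w ∞ :=
  let ⟨M, hM⟩ := hw.bounded
  memLp_top_of_bound hw.differentiable.continuous.aestronglyMeasurable M
    (.of_forall fun x => (hM x).1)

lemma memLp_top_deriv (hw : IsBoundedWeight w) : MemLp (deriv w) ∞ :=
  let ⟨M, hM⟩ := hw.bounded
  memLp_top_of_bound (aestronglyMeasurable_deriv w _) M (.of_forall fun x => (hM x).2)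

lemma mul (hv : IsBoundedWeight v) (hw : IsBoundedWeight w) :
    IsBoundedWeight (fun x => v x * w x) := by
  obtain ⟨M, hM⟩ := hv.bounded
  obtain ⟨N, hN⟩ := hw.bounded
  have hMN : 0 ≤ M * N := (norm_nonneg _).trans (norm_mul_le_of_le (hM 0).1 (hN 0).1)
  refine ⟨hv.differentiable.mul hw.differentiable, M * N + M * N, fun x => ⟨?_, ?_⟩⟩
  · exact (norm_mul_le_of_le (hM x).1 (hN x).1).trans (le_add_of_nonneg_right hMN)
  · rw [deriv_fun_mul (hv.differentiable x) (hw.differentiable x)]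
    exact norm_add_le_of_le (norm_mul_le_of_le (hM x).2 (hN x).1)
      (norm_mul_le_of_le (hM x).1 (hN x).2)

lemma integral_sq_mul_deriv (hw : IsBoundedWeight w) {p : ℝ → ℝ} (hp : Differentiable ℝ p)
    (hpL : MemLp p 2) (hpL' : MemLp (deriv p) 2) :
    ∫ x, p x ^ 2 * deriv w x = -2 * ∫ x, w x * (p x * deriv p x) :=
  integral_sq_mul_deriv_eq hw.differentiable hp hw.memLp_top hw.memLp_top_deriv hpL hpL'

end IsBoundedWeight

/-- The true momentum `P[f; Φ](t) = ∫ Φ ∂ₓf ∂ₜf dx` with weight `Φ`. -/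
noncomputable def trueMomentum (Φ : ℝ → ℝ) (f : ℝ → ℝ → ℝ) (t : ℝ) : ℝ :=
  ∫ x, Φ x * ∂ₓ f t x * ∂ₜ f t x

lemma hasDerivAt_trueMomentum {Φ : ℝ → ℝ} {f : ℝ → ℝ → ℝ} {t M : ℝ}
    (hΦ : AEStronglyMeasurable Φ) (hΦM : ∀ x, ‖Φ x‖ ≤ M) (hf : ContDiff ℝ 2 (uncurry f))
    (ht : LocallyL2Dominated (∂ₜ f) volume t) (hx : LocallyL2Dominated (∂ₓ f) volume t)
    (htt : LocallyL2Dominated (∂ₜ (∂ₜ f)) volume t)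
    (htx : LocallyL2Dominated (∂ₜ (∂ₓ f)) volume t) :
    HasDerivAt (trueMomentum Φ f)
      (∫ x, Φ x * (∂ₜ f t x * ∂ₓ (∂ₜ f) t x + ∂ₓ f t x * ∂ₜ (∂ₜ f) t x)) t := by
  have hft := contDiff_uncurry_timeDeriv hf (m := 1) one_add_one_eq_two.le
  have hfx := contDiff_uncurry_spaceDeriv hf (m := 1) one_add_one_eq_two.le
  have hftt := contDiff_uncurry_timeDeriv hft (m := 0) (zero_add 1).le
  have hftx := contDiff_uncurry_timeDeriv hfx (m := 0) (zero_add 1).le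
  have hderiv := hasDerivAt_integral_mul_of_locallyL2Dominated
    (hx.bdd_mul hΦM) ht (htx.bdd_mul hΦM) htt
    (fun s => hΦ.mul (hfx.continuous.uncurry_left s).aestronglyMeasurable)
    (fun s => (hft.continuous.uncurry_left s).aestronglyMeasurable)
    (hΦ.mul (hftx.continuous.uncurry_left t).aestronglyMeasurable)
    (hftt.continuous.uncurry_left t).aestronglyMeasurable
    (fun s x => (hasDerivAt_timeDeriv (hfx.differentiable one_ne_zero) s x).const_mul (Φ x))
    (hasDerivAt_timeDeriv (hft.differentiable one_ne_zero))
  rw [timeDeriv_spaceDeriv_comm hf (by simp)] at hderiv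
  exact hderiv.congr_deriv (by congr with x; ring)

lemma spatial_virial_identity {V Φ u v a : ℝ → ℝ} (hV : IsBoundedWeight V) (hΦ : IsBoundedWeight Φ)
    (hu : Differentiable ℝ u) (hu' : Differentiable ℝ (deriv u)) (hv : Differentiable ℝ v)
    (huL : MemLp u 2) (huL' : MemLp (deriv u) 2) (huL'' : MemLp (deriv (deriv u)) 2)
    (hvL : MemLp v 2) (hvL' : MemLp (deriv v) 2) (haL : MemLp a 2) :
    ∫ x, Φ x * (v x * deriv v x + deriv u x * a x)
      = -(1 / 2) * (∫ x, v x ^ 2 * deriv Φ x) - (1 / 2) * (∫ x, deriv u x ^ 2 * deriv Φ x)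
        + (1 / 2) * (∫ x, u x ^ 2 * deriv Φ x)
        + (1 / 2) * (∫ x, u x ^ 2 * deriv (fun y => V y * Φ y) x)
        + ∫ x, Φ x * deriv u x * (a x - deriv (deriv u) x + u x + V x * u x) := by
  have hΦL := hΦ.memLp_top
  have hvv := integrable_mul_mul_of_memLp_top_two hΦL hvL hvL'
  have hua := integrable_mul_mul_of_memLp_top_two hΦL huL' haL
  have huu'' := integrable_mul_mul_of_memLp_top_two hΦL huL' huL''
  have huu' := integrable_mul_mul_of_memLp_top_two hΦL huL huL'
  have hVuu' := integrable_mul_mul_of_memLp_top_two (hV.mul hΦ).memLp_top huL huL'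
  have hleft : ∫ x, Φ x * (v x * deriv v x + deriv u x * a x)
      = (∫ x, Φ x * (v x * deriv v x)) + ∫ x, Φ x * (deriv u x * a x) := by
    rw [← integral_add hvv hua]
    simp only [mul_add]
  have hright : ∫ x, Φ x * deriv u x * (a x - deriv (deriv u) x + u x + V x * u x)
      = (∫ x, Φ x * (deriv u x * a x)) - (∫ x, Φ x * (deriv u x * deriv (deriv u) x))
        + (∫ x, Φ x * (u x * deriv u x)) + ∫ x, V x * Φ x * (u x * deriv u x) := by
    rw [← integral_sub' hua huu'', ← integral_add' (hua.sub huu'') huu',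
      ← integral_add' ((hua.sub huu'').add huu') hVuu']
    congr with x
    simp only [Pi.add_apply, Pi.sub_apply]
    ring
  rw [hleft, hright, hΦ.integral_sq_mul_deriv hv hvL hvL', hΦ.integral_sq_mul_deriv hu' huL' huL'',
    hΦ.integral_sq_mul_deriv hu huL huL', (hV.mul hΦ).integral_sq_mul_deriv hu huL huL']
  ring

theorem virial_identity_true_momentum_general {V Φ : ℝ → ℝ} {f : ℝ → ℝ → ℝ} {t : ℝ}
    (hV : IsBoundedWeight V) (hΦ : IsBoundedWeight Φ) (hf : ContDiff ℝ 2 (uncurry f))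
    (hdom : ∀ j k : ℕ, j + k ≤ 2 → LocallyL2Dominated
      (fun s x => deriv^[j] (fun r => deriv^[k] (f r) x) s) volume t) :
    HasDerivAt (trueMomentum Φ f)
      (-(1 / 2) * (∫ x, ∂ₜ f t x ^ 2 * deriv Φ x) - (1 / 2) * (∫ x, ∂ₓ f t x ^ 2 * deriv Φ x)
        + (1 / 2) * (∫ x, f t x ^ 2 * deriv Φ x)
        + (1 / 2) * (∫ x, f t x ^ 2 * deriv (fun y => V y * Φ y) x)
        + ∫ x, Φ x * ∂ₓ f t x * (∂ₜ (∂ₜ f) t x - ∂ₓ (∂ₓ f) t x + f t x + V x * f t x)) t := by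
  have hft := contDiff_uncurry_timeDeriv hf (m := 1) one_add_one_eq_two.le
  have hfx := contDiff_uncurry_spaceDeriv hf (m := 1) one_add_one_eq_two.le
  have hftt := contDiff_uncurry_timeDeriv hft (m := 0) (zero_add 1).le
  have hftx := contDiff_uncurry_spaceDeriv hft (m := 0) (zero_add 1).le
  have hfxx := contDiff_uncurry_spaceDeriv hfx (m := 0) (zero_add 1).le
  have h0 : LocallyL2Dominated f volume t := hdom 0 0 zero_le_two
  have ht : LocallyL2Dominated (∂ₜ f) volume t := hdom 1 0 one_le_two
  have hx : LocallyL2Dominated (∂ₓ f) volume t := hdom 0 1 one_le_two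
  have htt : LocallyL2Dominated (∂ₜ (∂ₜ f)) volume t := hdom 2 0 le_rfl
  have htx : LocallyL2Dominated (∂ₜ (∂ₓ f)) volume t := hdom 1 1 le_rfl
  have hxx : LocallyL2Dominated (∂ₓ (∂ₓ f)) volume t := hdom 0 2 le_rfl
  obtain ⟨M, hM⟩ := hΦ.bounded
  have hP := hasDerivAt_trueMomentum hΦ.differentiable.continuous.aestronglyMeasurable
    (fun x => (hM x).1) hf ht hx htt htx
  rw [timeDeriv_spaceDeriv_comm hf (by simp)] at htx
  have memLp_slice {g : ℝ → ℝ → ℝ} (hg : Continuous (uncurry g))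
      (hgt : LocallyL2Dominated g volume t) : MemLp (g t) 2 :=
    hgt.memLp (hg.uncurry_left t).aestronglyMeasurable
  exact hP.congr_deriv (spatial_virial_identity hV hΦ
    (differentiable_right_of_uncurry (hf.differentiable two_ne_zero) t)
    (differentiable_right_of_uncurry (hfx.differentiable one_ne_zero) t)
    (differentiable_right_of_uncurry (hft.differentiable one_ne_zero) t)
    (memLp_slice hf.continuous h0) (memLp_slice hfx.continuous hx)
    (memLp_slice hfxx.continuous hxx) (memLp_slice hft.continuous ht)
    (memLp_slice hftx.continuous htx) (memLp_slice hftt.continuous htt))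

theorem virial_identity_true_momentum
    (V Φ : ℝ → ℝ) (f : ℝ → ℝ → ℝ)
    (hV : ContDiff ℝ (⊤ : ℕ∞) V)
    (hVbdd : ∃ M : ℝ, ∀ x, |V x| ≤ M ∧ |deriv V x| ≤ M)
    (hΦ : ContDiff ℝ (⊤ : ℕ∞) Φ)
    (hΦbdd : ∃ M : ℝ, ∀ x, |Φ x| ≤ M ∧ |deriv Φ x| ≤ M)
    (hf : ContDiff ℝ (⊤ : ℕ∞) (fun p : ℝ × ℝ => f p.1 p.2))
    -- f and its partial derivatives up to order two decay rapidly in x,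
    -- locally uniformly in t
    (hdecay : ∀ R : ℝ, 0 < R → ∀ n j k : ℕ, j + k ≤ 2 → ∃ C : ℝ,
      ∀ t : ℝ, |t| ≤ R → ∀ x : ℝ,
        (1 + |x|) ^ n * |deriv^[j] (fun s => deriv^[k] (fun y => f s y) x) t| ≤ C) :
    ∀ t : ℝ,
      HasDerivAt
        (fun τ => ∫ x : ℝ, Φ x * deriv (fun y => f τ y) x * deriv (fun s => f s x) τ)
        (-(1 / 2) * (∫ x : ℝ, (deriv (fun s => f s x) t) ^ 2 * deriv Φ x)
          - (1 / 2) * (∫ x : ℝ, (deriv (fun y => f t y) x) ^ 2 * deriv Φ x)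
          + (1 / 2) * (∫ x : ℝ, (f t x) ^ 2 * deriv Φ x)
          + (1 / 2) * (∫ x : ℝ, (f t x) ^ 2 * deriv (fun y => V y * Φ y) x)
          + ∫ x : ℝ,
              Φ x * deriv (fun y => f t y) x
                * (deriv (fun s => deriv (fun s' => f s' x) s) t
                    - deriv (fun y => deriv (fun y' => f t y') y) x
                    + f t x + V x * f t x))
        t := by
  intro t
  refine virial_identity_true_momentum_general ⟨hV.differentiable (by simp), hVbdd⟩
    ⟨hΦ.differentiable (by simp), hΦbdd⟩ (contDiff_infty.1 hf 2) fun j k hjk => ?_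
  obtain ⟨C, hC⟩ := hdecay (|t| + 1) (by positivity) 1 j k hjk
  have hnear : ∀ᶠ s in 𝓝 t, |s| ≤ |t| + 1 :=
    continuous_abs.continuousAt.eventually_le_const (lt_add_one |t|)
  exact locallyL2Dominated_of_one_add_norm_pow_mul_le (by simp) (hnear.mono hC)
end

section
/- With the Fourier transform convention 𝓕f(ξ) := (2π)^{−1/2} ∫_ℝ e^{−ixξ} f(x) dx, one has, for every ξ ∈ ℝ, 𝓕[sech](ξ) = √(π/2) · sech(πξ/2). -/
/-!
The substitution `t = σ(2x) = e^x / (2 cosh x)`, for which `1 - t = σ(-2x)` and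
`dt = 2 t (1 - t) dx`, turns the Beta integral `B(u, v)` into
`2 ∫ e^{(u - v) x} (2 cosh x)^{-(u + v)} dx`. On the line `u + v = 1`, with `u - v = z`, this is
`∫ e^{z x} sech x dx`, while Euler's reflection formula gives
`B(u, 1 - u) = π / sin (π u) = π / cos (π z / 2)`. The Fourier transform is the case `z = -iξ`.
-/

open Real Complex

noncomputable def sech (x : ℝ) : ℝ := (Real.cosh x)⁻¹

open Set MeasureTheory

lemma ofReal_exp_cpow (x : ℝ) (s : ℂ) : ((Real.exp x : ℝ) : ℂ) ^ s = Complex.exp (x * s) := by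
  rw [cpow_def_of_ne_zero (ofReal_ne_zero.mpr (Real.exp_pos x).ne'),
    ← Complex.ofReal_log (Real.exp_pos x).le, Real.log_exp]

lemma sigmoid_two_mul (x : ℝ) :
    Real.sigmoid (2 * x) = Real.exp x / (2 * Real.cosh x) := by
  have hexp : Real.exp (-(2 * x)) = Real.exp (-x) / Real.exp x := by
    rw [← Real.exp_sub]
    ring_nf
  rw [Real.sigmoid_def, Real.cosh_eq, hexp]
  field_simp

lemma sigmoid_two_mul_cpow (x : ℝ) (s : ℂ) :
    (Real.sigmoid (2 * x) : ℂ) ^ s =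
      Complex.exp (x * s) / ((2 * Real.cosh x : ℝ) : ℂ) ^ s := by
  rw [sigmoid_two_mul, ofReal_div, div_cpow_ofReal_nonneg (by positivity) (by positivity),
    ofReal_exp_cpow]

lemma betaIntegral_eq_integral_sigmoid_cpow (u v : ℂ) :
    betaIntegral u v =
      ∫ x : ℝ, (Real.sigmoid x : ℂ) ^ u * (Real.sigmoid (-x) : ℂ) ^ v := by
  rw [betaIntegral, intervalIntegral.integral_of_le zero_le_one, integral_Ioc_eq_integral_Ioo,
    ← Real.range_sigmoid, ← image_univ,
    integral_image_eq_integral_deriv_smul_of_monotoneOn MeasurableSet.univ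
      (fun x _ => (Real.hasDerivAt_sigmoid x).hasDerivWithinAt)
      (Real.sigmoid_monotone.monotoneOn univ), setIntegral_univ]
  refine integral_congr_ae (.of_forall fun x => ?_)
  have hσ : (Real.sigmoid x : ℂ) ≠ 0 := ofReal_ne_zero.mpr (Real.sigmoid_pos x).ne'
  have hσ_neg : (Real.sigmoid (-x) : ℂ) ≠ 0 := ofReal_ne_zero.mpr (Real.sigmoid_pos (-x)).ne'
  have hone_sub : 1 - (Real.sigmoid x : ℂ) = Real.sigmoid (-x) := by
    rw [Real.sigmoid_neg, ofReal_sub, ofReal_one]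
  simp only [hone_sub, ← Real.sigmoid_neg, real_smul, ofReal_mul, cpow_sub _ _ hσ,
    cpow_sub _ _ hσ_neg, cpow_one]
  field_simp

lemma sigmoid_cpow_mul_sigmoid_neg_cpow (x : ℝ) (u v : ℂ) :
    (Real.sigmoid (2 * x) : ℂ) ^ u * (Real.sigmoid (-(2 * x)) : ℂ) ^ v =
      Complex.exp ((u - v) * x) * ((2 * Real.cosh x : ℝ) : ℂ) ^ (-(u + v)) := by
  have hcosh : ((2 * Real.cosh x : ℝ) : ℂ) ≠ 0 := ofReal_ne_zero.mpr (by positivity)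
  rw [← mul_neg, sigmoid_two_mul_cpow, sigmoid_two_mul_cpow, Real.cosh_neg, div_mul_div_comm,
    ← Complex.exp_add, ← cpow_add _ _ hcosh, cpow_neg, ← div_eq_mul_inv]
  push_cast
  ring_nf

lemma betaIntegral_eq_integral_exp_mul_cosh_cpow (u v : ℂ) :
    betaIntegral u v =
      2 * ∫ x : ℝ, Complex.exp ((u - v) * x) * ((2 * Real.cosh x : ℝ) : ℂ) ^ (-(u + v)) := by
  simp only [← sigmoid_cpow_mul_sigmoid_neg_cpow]
  rw [Measure.integral_comp_mul_left
    (fun x : ℝ => (Real.sigmoid x : ℂ) ^ u * (Real.sigmoid (-x) : ℂ) ^ v) 2,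
    ← betaIntegral_eq_integral_sigmoid_cpow]
  simp

lemma betaIntegral_one_sub {u : ℂ} (hu₀ : 0 < u.re) (hu₁ : u.re < 1) :
    betaIntegral u (1 - u) = π / Complex.sin (π * u) := by
  rw [betaIntegral_eq_Gamma_mul_div u (1 - u) hu₀ (by simpa using hu₁), add_sub_cancel,
    Complex.Gamma_one, div_one, Complex.Gamma_mul_Gamma_one_sub]

lemma integral_exp_mul_sech {z : ℂ} (hz : |z.re| < 1) :
    ∫ x : ℝ, Complex.exp (z * x) * (sech x : ℂ) = π / Complex.cos (π * z / 2) := by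
  obtain ⟨hz_left, hz_right⟩ := abs_lt.mp hz
  set u : ℂ := (1 + z) / 2 with hu
  have hu_re : u.re = (1 + z.re) / 2 := by simp [hu]
  have hsub : u - (1 - u) = z := by rw [hu]; ring
  calc ∫ x : ℝ, Complex.exp (z * x) * (sech x : ℂ)
      = betaIntegral u (1 - u) := by
        rw [betaIntegral_eq_integral_exp_mul_cosh_cpow, hsub, ← integral_const_mul]
        refine integral_congr_ae (.of_forall fun x => ?_)
        simp only [add_sub_cancel, cpow_neg_one, sech]
        push_cast
        ring
    _ = π / Complex.sin (π * u) :=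
        betaIntegral_one_sub (by linarith) (by linarith)
    _ = π / Complex.cos (π * z / 2) := by
        rw [← Complex.sin_add_pi_div_two, hu]
        ring_nf

lemma inv_sqrt_two_mul_pi_mul_pi : (√(2 * π))⁻¹ * π = √(π / 2) := by
  rw [inv_mul_eq_iff_eq_mul₀ (by positivity), ← Real.sqrt_mul (by positivity),
    show 2 * π * (π / 2) = π ^ 2 by ring, Real.sqrt_sq pi_pos.le]

theorem fourier_transform_sech_general (ξ : ℂ) (hξ : |ξ.im| < 1) :
    ((√(2 * π) : ℝ) : ℂ)⁻¹ * (∫ x : ℝ, Complex.exp (-I * x * ξ) * (sech x : ℂ)) =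
      (√(π / 2) : ℝ) * (Complex.cosh (π * ξ / 2))⁻¹ := by
  have hcosh : Complex.cos (π * (-I * ξ) / 2) = Complex.cosh (π * ξ / 2) := by
    rw [← Complex.cos_mul_I, ← Complex.cos_neg]
    ring_nf
  simp only [mul_right_comm (-I) _ ξ]
  rw [integral_exp_mul_sech (by simpa using hξ), hcosh, ← inv_sqrt_two_mul_pi_mul_pi]
  push_cast
  ring

theorem fourier_transform_sech (ξ : ℝ) :
    ((Real.sqrt (2 * Real.pi) : ℝ) : ℂ)⁻¹ *
        (∫ x : ℝ, Complex.exp (-Complex.I * x * ξ) * ((sech x : ℝ) : ℂ)) =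
      ((Real.sqrt (Real.pi / 2) * sech (Real.pi * ξ / 2) : ℝ) : ℂ) := by
  simpa [sech] using fourier_transform_sech_general ξ (by simp)
end

section
/- Let a ∈ (0,1) and b := √(1 − a²). Define U(t,x) := cosh(ax) + a sinh(ax) − a eˣ cos(bt) and V(t,x) := eˣ ( cosh(ax) − a sinh(ax) − a e^{−x} cos(bt) ). Then on the open set { (t,x) ∈ ℝ² : U(t,x) ≠ 0 }, the function W(t,x) := 4 arctan( V(t,x) / U(t,x) ) satisfies the Sine–Gordon equation ∂ₜ²W − ∂ₓ²W + sin W = 0 (the 'wobbling kink' solution, which converges to the kink K(x) = 4 arctan(eˣ) as a → 0). -/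
open Real Filter

/-!
Write `F = u + i v`, so that `arctan (v / u)` is locally `Im (log F)` up to a constant and its
second derivative is `Im ((F F'' - F'²) / F²)`, whereas `sin (4 arctan (v / u)) = Im (F² / F̄²)`.
Since `Im (F̄² / F²) = -Im (F² / F̄²)`, the function `4 arctan (v / u)` solves the Sine–Gordon
equation as soon as `F Fₜₜ - Fₜ² - F Fₓₓ + Fₓ² = (F̄² - F²) / 4`. The imaginary and real parts of
this are Hirota's two bilinear equations, which the wobbling kinks satisfy. All that matters about
`c t = cos (b t)` is `c'' = (a² - 1) c` and `c'² = (1 - a²) (1 - c²)`.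
-/

/-- The left-hand side `∂ₜ²φ - ∂ₓ²φ + sin φ` of the Sine–Gordon equation, for `φ` a function of time
and space in this order. -/
noncomputable def sineGordon (φ : ℝ → ℝ → ℝ) (t x : ℝ) : ℝ :=
  deriv (fun s => deriv (fun s' => φ s' x) s) t - deriv (fun y => deriv (fun y' => φ t y') y) x
    + sin (φ t x)

/-- Hirota's second order bilinear derivative `D² f·g = f'' g - 2 f' g' + f g''`. -/
noncomputable def hirotaDeriv₂ (f g : ℝ → ℝ) (x : ℝ) : ℝ :=
  deriv (deriv f) x * g x - 2 * (deriv f x * deriv g x) + f x * deriv (deriv g) x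

section ArctanDiv

lemma sin_four_mul_arctan (r : ℝ) :
    sin (4 * arctan r) = 4 * r * (1 - r ^ 2) / (1 + r ^ 2) ^ 2 := by
  have hsin : sin (arctan r) = r * cos (arctan r) := by
    rw [← tan_mul_cos (cos_arctan_pos r).ne', tan_arctan]
  have hquad : sin (4 * arctan r)
      = 4 * r * cos (arctan r) ^ 2 * (2 * cos (arctan r) ^ 2 - 1) := by
    rw [show 4 * arctan r = 2 * (2 * arctan r) by ring, sin_two_mul, sin_two_mul, cos_two_mul, hsin]
    ring
  rw [hquad, cos_sq_arctan]
  field_simp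
  ring

lemma sin_four_mul_arctan_div {p q : ℝ} (hp : p ≠ 0) :
    sin (4 * arctan (q / p)) = 4 * (p * q * (p ^ 2 - q ^ 2)) / (p ^ 2 + q ^ 2) ^ 2 := by
  have hpq : p ^ 2 + q ^ 2 ≠ 0 := by positivity
  rw [sin_four_mul_arctan]
  field_simp

variable {u v : ℝ → ℝ} {x : ℝ}

lemma hasDerivAt_arctan_div {u' v' : ℝ} (hu : HasDerivAt u u' x) (hv : HasDerivAt v v' x)
    (hx : u x ≠ 0) :
    HasDerivAt (fun y => arctan (v y / u y))
      ((v' * u x - v x * u') / (u x ^ 2 + v x ^ 2)) x := by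
  have huv : u x ^ 2 + v x ^ 2 ≠ 0 := by positivity
  refine (hv.fun_div hu hx).arctan.congr_deriv ?_
  field_simp

lemma deriv_deriv_arctan_div (hu : ContDiffAt ℝ 2 u x) (hv : ContDiffAt ℝ 2 v x) (hx : u x ≠ 0) :
    deriv (deriv fun y => arctan (v y / u y)) x =
      (hirotaDeriv₂ u v x * (u x ^ 2 - v x ^ 2)
        - (hirotaDeriv₂ u u x - hirotaDeriv₂ v v x) * (u x * v x)) / (u x ^ 2 + v x ^ 2) ^ 2 := by
  have huv : u x ^ 2 + v x ^ 2 ≠ 0 := by positivity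
  have hfirst : (deriv fun y => arctan (v y / u y)) =ᶠ[nhds x]
      fun y => (deriv v y * u y - v y * deriv u y) / (u y ^ 2 + v y ^ 2) := by
    filter_upwards [hu.continuousAt.eventually_ne hx, hu.eventually (by simp),
      hv.eventually (by simp)] with y hy huy hvy
    exact (hasDerivAt_arctan_div (huy.differentiableAt two_ne_zero).hasDerivAt
      (hvy.differentiableAt two_ne_zero).hasDerivAt hy).deriv
  have hu' := (hu.differentiableAt two_ne_zero).hasDerivAt
  have hv' := (hv.differentiableAt two_ne_zero).hasDerivAt
  have hu'' := ((hu.derivWithin (m := 1) (by norm_num)).differentiableAt one_ne_zero).hasDerivAt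
  have hv'' := ((hv.derivWithin (m := 1) (by norm_num)).differentiableAt one_ne_zero).hasDerivAt
  rw [hfirst.deriv_eq, (((hv''.fun_mul hu').fun_sub (hv'.fun_mul hu'')).fun_div
    ((hu'.fun_pow 2).fun_add (hv'.fun_pow 2)) huv).deriv]
  simp only [hirotaDeriv₂]
  field_simp
  ring

end ArctanDiv

theorem sineGordon_four_mul_arctan_div_eq_zero {u v : ℝ → ℝ → ℝ} {t x : ℝ}
    (hut : ContDiffAt ℝ 2 (fun s => u s x) t) (hvt : ContDiffAt ℝ 2 (fun s => v s x) t)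
    (hux : ContDiffAt ℝ 2 (u t) x) (hvx : ContDiffAt ℝ 2 (v t) x) (hne : u t x ≠ 0)
    (him : hirotaDeriv₂ (fun s => u s x) (fun s => v s x) t - hirotaDeriv₂ (u t) (v t) x
      = -(u t x * v t x))
    (hre : hirotaDeriv₂ (fun s => u s x) (fun s => u s x) t - hirotaDeriv₂ (u t) (u t) x
      = hirotaDeriv₂ (fun s => v s x) (fun s => v s x) t - hirotaDeriv₂ (v t) (v t) x) :
    sineGordon (fun s y => 4 * arctan (v s y / u s y)) t x = 0 := by
  simp only [sineGordon, deriv_const_mul_field]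
  rw [deriv_deriv_arctan_div hut hvt hne, deriv_deriv_arctan_div hux hvx hne,
    sin_four_mul_arctan_div hne, ← mul_sub, ← sub_div, ← mul_div_assoc, ← add_div]
  refine div_eq_zero_iff.mpr (Or.inl ?_)
  linear_combination 4 * (u t x ^ 2 - v t x ^ 2) * him - 4 * (u t x * v t x) * hre

lemma hasDerivAt_cosh_const_mul (a x : ℝ) :
    HasDerivAt (fun y => cosh (a * y)) (a * sinh (a * x)) x := by
  simpa [mul_comm] using (hasDerivAt_const_mul a).cosh

lemma hasDerivAt_sinh_const_mul (a x : ℝ) :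
    HasDerivAt (fun y => sinh (a * y)) (a * cosh (a * x)) x := by
  simpa [mul_comm] using (hasDerivAt_const_mul a).sinh

lemma deriv_cos_const_mul (b : ℝ) : (deriv fun s => cos (b * s)) = fun s => -(b * sin (b * s)) := by
  ext s
  simpa [mul_comm] using (hasDerivAt_const_mul b (x := s)).cos.deriv

lemma deriv_deriv_cos_const_mul (b t : ℝ) :
    deriv (deriv fun s => cos (b * s)) t = -(b ^ 2 * cos (b * t)) := by
  rw [deriv_cos_const_mul]
  exact (((hasDerivAt_const_mul b).sin.const_mul b).fun_neg).deriv.trans (by ring)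

section WobblingKink

/-- The function `U` of the wobbling kink `4 arctan (V / U)`, with `k` in place of `cos (b t)`. -/
noncomputable def wobblingU (a k x : ℝ) : ℝ :=
  cosh (a * x) + a * sinh (a * x) - a * exp x * k

/-- The function `V` of the wobbling kink, with `k` in place of `cos (b t)`. -/
noncomputable def wobblingV (a k x : ℝ) : ℝ :=
  exp x * (cosh (a * x) - a * sinh (a * x) - a * exp (-x) * k)

variable (a k : ℝ)

lemma wobblingV_eq (x : ℝ) :
    wobblingV a k x = exp x * (cosh (a * x) - a * sinh (a * x)) - a * k := by
  have hexp : exp x * exp (-x) = 1 := by rw [← exp_add, add_neg_cancel, exp_zero]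
  rw [wobblingV]
  linear_combination -a * k * hexp

lemma contDiff_wobblingU {n : WithTop ℕ∞} : ContDiff ℝ n (wobblingU a k) := by
  unfold wobblingU; fun_prop

lemma contDiff_wobblingV {n : WithTop ℕ∞} : ContDiff ℝ n (wobblingV a k) := by
  unfold wobblingV; fun_prop

lemma deriv_wobblingU :
    deriv (wobblingU a k) = fun x => a * sinh (a * x) + a ^ 2 * cosh (a * x) - a * exp x * k := by
  ext x
  refine HasDerivAt.deriv ?_
  unfold wobblingU
  exact (((hasDerivAt_cosh_const_mul a x).fun_add
    ((hasDerivAt_sinh_const_mul a x).const_mul a)).fun_sub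
    (((hasDerivAt_exp x).const_mul a).mul_const k)).congr_deriv (by ring)

lemma deriv_deriv_wobblingU (x : ℝ) :
    deriv (deriv (wobblingU a k)) x =
      a ^ 2 * (cosh (a * x) + a * sinh (a * x)) - a * exp x * k := by
  rw [deriv_wobblingU]
  exact ((((hasDerivAt_sinh_const_mul a x).const_mul a).fun_add
    ((hasDerivAt_cosh_const_mul a x).const_mul (a ^ 2))).fun_sub
    (((hasDerivAt_exp x).const_mul a).mul_const k)).deriv.trans (by ring)

lemma deriv_wobblingV :
    deriv (wobblingV a k) = fun x => (1 - a ^ 2) * (exp x * cosh (a * x)) := by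
  ext x
  rw [funext (wobblingV_eq a k)]
  exact (((hasDerivAt_exp x).fun_mul ((hasDerivAt_cosh_const_mul a x).fun_sub
    ((hasDerivAt_sinh_const_mul a x).const_mul a))).sub_const (a * k)).deriv.trans (by ring)

lemma deriv_deriv_wobblingV (x : ℝ) :
    deriv (deriv (wobblingV a k)) x =
      (1 - a ^ 2) * (exp x * (cosh (a * x) + a * sinh (a * x))) := by
  rw [deriv_wobblingV]
  exact (((hasDerivAt_exp x).fun_mul (hasDerivAt_cosh_const_mul a x)).const_mul
    (1 - a ^ 2)).deriv.trans (by ring)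

lemma deriv_wobblingU_comp (c : ℝ → ℝ) (x : ℝ) :
    (deriv fun s => wobblingU a (c s) x) = fun s => -(a * exp x * deriv c s) := by
  ext; simp [wobblingU]

lemma deriv_wobblingV_comp (c : ℝ → ℝ) (x : ℝ) :
    (deriv fun s => wobblingV a (c s) x) = fun s => -(a * deriv c s) := by
  ext; simp [wobblingV_eq]

variable {a} {c : ℝ → ℝ} {t : ℝ}

lemma hirotaDeriv₂_wobblingU_wobblingV (hc' : deriv c t ^ 2 = (1 - a ^ 2) * (1 - c t ^ 2))
    (hc'' : deriv (deriv c) t = (a ^ 2 - 1) * c t) (x : ℝ) :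
    hirotaDeriv₂ (fun s => wobblingU a (c s) x) (fun s => wobblingV a (c s) x) t
        - hirotaDeriv₂ (wobblingU a (c t)) (wobblingV a (c t)) x
      = -(wobblingU a (c t) x * wobblingV a (c t) x) := by
  simp only [hirotaDeriv₂, deriv_wobblingU_comp, deriv_wobblingV_comp, deriv_deriv_wobblingU,
    deriv_deriv_wobblingV]
  simp only [deriv_wobblingU, deriv_wobblingV, deriv.fun_neg, deriv_const_mul_field, hc'',
    wobblingU, wobblingV_eq]
  linear_combination 2 * a ^ 2 * exp x * ((1 - a ^ 2) * cosh_sq (a * x) - hc')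

lemma hirotaDeriv₂_wobblingU_self (hc' : deriv c t ^ 2 = (1 - a ^ 2) * (1 - c t ^ 2))
    (hc'' : deriv (deriv c) t = (a ^ 2 - 1) * c t) (x : ℝ) :
    hirotaDeriv₂ (fun s => wobblingU a (c s) x) (fun s => wobblingU a (c s) x) t
        - hirotaDeriv₂ (wobblingU a (c t)) (wobblingU a (c t)) x
      = hirotaDeriv₂ (fun s => wobblingV a (c s) x) (fun s => wobblingV a (c s) x) t
        - hirotaDeriv₂ (wobblingV a (c t)) (wobblingV a (c t)) x := by
  simp only [hirotaDeriv₂, deriv_wobblingU_comp, deriv_wobblingV_comp, deriv_deriv_wobblingU,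
    deriv_deriv_wobblingV]
  simp only [deriv_wobblingU, deriv_wobblingV, deriv.fun_neg, deriv_const_mul_field, hc'',
    wobblingU, wobblingV_eq]
  linear_combination 2 * a ^ 2 * (exp x ^ 2 - 1) * ((1 - a ^ 2) * cosh_sq (a * x) - hc')

end WobblingKink

/-- For `|a| > 1` this applies to `c t = cosh (√(a² - 1) t)`. -/
theorem sine_Gordon_wobbling_kink_general {a : ℝ} {c : ℝ → ℝ} {t x : ℝ} (hc : ContDiffAt ℝ 2 c t)
    (hc' : deriv c t ^ 2 = (1 - a ^ 2) * (1 - c t ^ 2))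
    (hc'' : deriv (deriv c) t = (a ^ 2 - 1) * c t) (hne : wobblingU a (c t) x ≠ 0) :
    sineGordon (fun s y => 4 * arctan (wobblingV a (c s) y / wobblingU a (c s) y)) t x = 0 :=
  sineGordon_four_mul_arctan_div_eq_zero (by unfold wobblingU; fun_prop)
    (by unfold wobblingV; fun_prop) (contDiff_wobblingU a (c t)).contDiffAt
    (contDiff_wobblingV a (c t)).contDiffAt hne (hirotaDeriv₂_wobblingU_wobblingV hc' hc'' x)
    (hirotaDeriv₂_wobblingU_self hc' hc'' x)

theorem sine_Gordon_wobbling_kink (a : ℝ) (ha : a ∈ Set.Ioo (0 : ℝ) 1)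
    (b : ℝ) (hb : b = Real.sqrt (1 - a ^ 2))
    (U V W : ℝ → ℝ → ℝ)
    (hU : ∀ t x, U t x = Real.cosh (a * x) + a * Real.sinh (a * x)
      - a * Real.exp x * Real.cos (b * t))
    (hV : ∀ t x, V t x = Real.exp x * (Real.cosh (a * x) - a * Real.sinh (a * x)
      - a * Real.exp (-x) * Real.cos (b * t)))
    (hW : ∀ t x, W t x = 4 * Real.arctan (V t x / U t x)) :
    ∀ t x : ℝ, U t x ≠ 0 →
      deriv (fun s => deriv (fun s' => W s' x) s) t
        - deriv (fun y => deriv (fun y' => W t y') y) x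
        + Real.sin (W t x) = 0 := by
  intro t x hne
  have hb_sq : b ^ 2 = 1 - a ^ 2 := by
    rw [hb, sq_sqrt (by nlinarith [ha.1, ha.2])]
  obtain rfl : U = fun t x => wobblingU a (cos (b * t)) x := funext₂ hU
  obtain rfl : V = fun t x => wobblingV a (cos (b * t)) x := funext₂ hV
  obtain rfl : W = fun t x =>
      4 * arctan (wobblingV a (cos (b * t)) x / wobblingU a (cos (b * t)) x) := funext₂ hW
  refine sine_Gordon_wobbling_kink_general (c := fun s => cos (b * s)) (by fun_prop) ?_ ?_ hne
  · rw [deriv_cos_const_mul]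
    linear_combination b ^ 2 * sin_sq (b * t) + (1 - cos (b * t) ^ 2) * hb_sq
  · rw [deriv_deriv_cos_const_mul]
    linear_combination -cos (b * t) * hb_sq
end
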